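/- arXiv:math/0103137 — 2 statements merged into one kernel-verified Lean document; each statement's English description precedes it below -/
import Mathlib

section
/- Let L be a free ℤ-module of finite rank with a nondegenerate symmetric bilinear form B, let M ⊆ L be a primitive submodule (i.e. L/M is torsion-free), and let f, f' ∈ M⊥ satisfy B(f,f) = 0, B(f',f') = 0, B(f,f') = 1. Define the mirror lattice M̌ = M⊥ ∩ f⊥ ∩ (f')⊥. Then f, f' ∈ M̌⊥, the orthogonal complement M̌⊥ equals the internal direct sum M ⊕ ℤf ⊕ ℤf', and M̌⊥ ∩ f⊥ ∩ (f')⊥ = M. In particular, the mirror construction M ↦ M̌ performed with the same hyperbolic pair (f, f') is an involution: applying it to M̌ recovers M. -/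
/-!
STATEMENT 1: `L` a free ℤ-module of finite rank with a nondegenerate symmetric bilinear
form `B`, `M ⊆ L` a primitive submodule, `f, f' ∈ M⊥` a hyperbolic pair. With the mirror
lattice `M̌ = M⊥ ∩ f⊥ ∩ (f')⊥` one has: `f, f' ∈ M̌⊥`; `M̌⊥` is the internal direct sum
`M ⊕ ℤf ⊕ ℤf'`; and `M̌⊥ ∩ f⊥ ∩ (f')⊥ = M`, i.e. the mirror construction is an involution.
-/

/-- The orthogonal complement of a submodule `S` with respect to `B`:
`{x : L | ∀ s ∈ S, B x s = 0}`. -/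
def sperp {L : Type*} [AddCommGroup L] (B : L →ₗ[ℤ] L →ₗ[ℤ] ℤ)
    (S : Submodule ℤ L) : Submodule ℤ L where
  carrier := {x | ∀ s ∈ S, B x s = 0}
  add_mem' := by
    intro a b ha hb s hs
    rw [map_add, LinearMap.add_apply, ha s hs, hb s hs, add_zero]
  zero_mem' := by
    intro s hs
    rw [map_zero, LinearMap.zero_apply]
  smul_mem' := by
    intro c a ha s hs
    rw [map_smul, LinearMap.smul_apply, ha s hs, smul_zero]

/-- The orthogonal complement of a single vector `v` with respect to `B`. -/
def eperp {L : Type*} [AddCommGroup L] (B : L →ₗ[ℤ] L →ₗ[ℤ] ℤ) (v : L) :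
    Submodule ℤ L :=
  LinearMap.ker (B.flip v)

theorem sperp_sperp_le
    {L : Type*} [AddCommGroup L] [Module.Free ℤ L] [Module.Finite ℤ L]
    (B : L →ₗ[ℤ] L →ₗ[ℤ] ℤ) (hsym : ∀ x y : L, B x y = B y x)
    (hnd : ∀ x : L, (∀ y : L, B x y = 0) → x = 0)
    (M : Submodule ℤ L)
    (hprim : ∀ (n : ℤ) (x : L), n ≠ 0 → n • x ∈ M → x ∈ M)
    (x : L) (hx : ∀ y ∈ sperp B M, B x y = 0) : x ∈ M := by
  by_contra hxM
  have htf : Module.IsTorsionFree ℤ (L ⧸ M) := by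
    refine Module.IsTorsionFree.of_smul_eq_zero ?_
    intro n q h
    obtain ⟨z, rfl⟩ := Submodule.Quotient.mk_surjective M q
    by_contra! hc
    rw [← Submodule.Quotient.mk_smul, Submodule.Quotient.mk_eq_zero] at h
    exact hc.2 ((Submodule.Quotient.mk_eq_zero M).2 (hprim n z hc.1 h))
  have hfree : Module.Free ℤ (L ⧸ M) := inferInstance
  have hq : (M.mkQ x) ≠ 0 := by
    simpa using hxM
  obtain ⟨ψ, hψ⟩ : ∃ ψ : Module.Dual ℤ (L ⧸ M), ψ (M.mkQ x) ≠ 0 := by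
    by_contra! hc
    exact hq ((Module.forall_dual_apply_eq_zero_iff ℤ _).1 hc)
  let φ : Module.Dual ℤ L := ψ.comp M.mkQ
  have hinj : Function.Injective B := by
    rw [injective_iff_map_eq_zero]
    intro a ha
    exact hnd a fun y => by rw [ha]; rfl
  let R : Submodule ℤ (Module.Dual ℤ L) := LinearMap.range B
  have h1 : Module.finrank ℤ R = Module.finrank ℤ L := LinearMap.finrank_range_of_inj hinj
  have h2 : Module.finrank ℤ (Module.Dual ℤ L ⧸ R) + Module.finrank ℤ R
      = Module.finrank ℤ (Module.Dual ℤ L) := Submodule.finrank_quotient_add_finrank R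
  have h3 : Module.finrank ℤ (Module.Dual ℤ L) = Module.finrank ℤ L := by
    simp [Module.Dual, Module.finrank_linearMap]
  have h4 : Module.finrank ℤ (Module.Dual ℤ L ⧸ R) = 0 := by omega
  rw [Module.finrank_eq_zero_iff] at h4
  obtain ⟨n, hn, hnφ⟩ := h4 (R.mkQ φ)
  rw [← map_smul, Submodule.mkQ_apply, Submodule.Quotient.mk_eq_zero] at hnφ
  obtain ⟨y, hy⟩ := hnφ
  have hyv : ∀ z, B y z = n * ψ (M.mkQ z) := fun z => by
    rw [hy]; rfl
  have hyM : y ∈ sperp B M := by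
    intro s hs
    rw [hyv, Submodule.mkQ_apply, (Submodule.Quotient.mk_eq_zero M).2 hs]
    simp
  have := hx y hyM
  rw [hsym, hyv] at this
  exact (mul_ne_zero hn hψ) this

theorem mirror_lattice_involution
    (L : Type*) [AddCommGroup L] [Module.Free ℤ L] [Module.Finite ℤ L]
    (B : L →ₗ[ℤ] L →ₗ[ℤ] ℤ) (hsym : ∀ x y : L, B x y = B y x)
    (hnd : ∀ x : L, (∀ y : L, B x y = 0) → x = 0)
    (M : Submodule ℤ L)
    (hprim : ∀ (n : ℤ) (x : L), n ≠ 0 → n • x ∈ M → x ∈ M)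
    (f f' : L) (hfM : f ∈ sperp B M) (hf'M : f' ∈ sperp B M)
    (hff : B f f = 0) (hf'f' : B f' f' = 0) (hff' : B f f' = 1) :
    (f ∈ sperp B (sperp B M ⊓ eperp B f ⊓ eperp B f') ∧
     f' ∈ sperp B (sperp B M ⊓ eperp B f ⊓ eperp B f')) ∧
    (sperp B (sperp B M ⊓ eperp B f ⊓ eperp B f')
        = M ⊔ Submodule.span ℤ ({f, f'} : Set L)) ∧
    (Disjoint M (Submodule.span ℤ ({f, f'} : Set L)) ∧
      LinearIndependent ℤ ![f, f']) ∧
    (sperp B (sperp B M ⊓ eperp B f ⊓ eperp B f') ⊓ eperp B f ⊓ eperp B f' = M) := by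
  have hf'f : B f' f = 1 := by rw [hsym, hff']
  have me : ∀ x v, x ∈ eperp B v ↔ B x v = 0 := fun x v => Iff.rfl
  have hfmem : f ∈ sperp B (sperp B M ⊓ eperp B f ⊓ eperp B f') := by
    rintro s ⟨⟨-, h⟩, -⟩
    rw [hsym]; exact h
  have hf'mem : f' ∈ sperp B (sperp B M ⊓ eperp B f ⊓ eperp B f') := by
    rintro s ⟨⟨-, -⟩, h⟩
    rw [hsym]; exact h
  have hMle : M ≤ sperp B (sperp B M ⊓ eperp B f ⊓ eperp B f') := by
    rintro m hm s ⟨⟨h, -⟩, -⟩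
    rw [hsym]; exact h m hm
  have key : ∀ x ∈ sperp B (sperp B M ⊓ eperp B f ⊓ eperp B f'),
      x - (B x f' • f + B x f • f') ∈ M := by
    intro x hx
    refine sperp_sperp_le B hsym hnd M hprim _ ?_
    intro y hy
    have hy' : y - (B y f' • f + B y f • f') ∈ sperp B M ⊓ eperp B f ⊓ eperp B f' := by
      refine ⟨⟨?_, ?_⟩, ?_⟩
      · exact Submodule.sub_mem _ hy (Submodule.add_mem _ (Submodule.smul_mem _ _ hfM)
          (Submodule.smul_mem _ _ hf'M))
      · refine (me _ _).2 ?_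
        simp [hff, hf'f]
      · refine (me _ _).2 ?_
        simp [hff', hf'f']
    have h := hx _ hy'
    simp only [map_sub, map_add, map_smul, LinearMap.sub_apply, LinearMap.add_apply,
      LinearMap.smul_apply, smul_eq_mul] at h ⊢
    rw [hsym f y, hsym f' y]
    linarith
  have hspan : ∀ a b : ℤ, ∀ x ∈ M, x = a • f + b • f' → a = 0 ∧ b = 0 := by
    intro a b x hx h
    have e1 : B f x = 0 := hfM x hx
    have e2 : B f' x = 0 := hf'M x hx
    rw [h] at e1 e2
    simp [hff, hff', hf'f, hf'f'] at e1 e2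
    exact ⟨e2, e1⟩
  refine ⟨⟨hfmem, hf'mem⟩, le_antisymm ?_ ?_, ⟨?_, ?_⟩, le_antisymm ?_ ?_⟩
  · intro x hx
    exact Submodule.mem_sup.2 ⟨_, key x hx, B x f' • f + B x f • f',
      Submodule.mem_span_pair.2 ⟨_, _, rfl⟩, sub_add_cancel _ _⟩
  · refine sup_le hMle (Submodule.span_le.2 ?_)
    rintro z (rfl | rfl)
    · exact hfmem
    · exact hf'mem
  · rw [Submodule.disjoint_def]
    intro x hx hs
    obtain ⟨a, b, rfl⟩ := Submodule.mem_span_pair.1 hs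
    obtain ⟨rfl, rfl⟩ := hspan a b _ hx rfl
    simp
  · rw [LinearIndependent.pair_iff]
    intro a b h
    exact hspan a b 0 M.zero_mem h.symm
  · rintro x ⟨⟨hx, h1⟩, h2⟩
    have h := key x hx
    rw [(me _ _).1 h1, (me _ _).1 h2] at h
    simpa using h
  · intro m hm
    refine ⟨⟨hMle hm, (me _ _).2 ?_⟩, (me _ _).2 ?_⟩
    · rw [hsym]; exact hfM m hm
    · rw [hsym]; exact hf'M m hm
end

section
/- Let Δ ⊆ ℝ^{2+n} be a countable set of vectors with B(δ,δ) < 0 for every δ ∈ Δ. Then the set Ω \ ⋃_{δ∈Δ} {z ∈ ℂ^{2+n} : B_ℂ(z, δ) = 0}, obtained from the period domain cone by removing the hyperplanes orthogonal to the vectors of Δ, has exactly two connected components. (Applied to the set Δ(M⊥) of (−2)-vectors of M⊥, this is the statement that the period domain D_M of marked ample M-polarized K3 surfaces has two connected components.) -/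
/-- The symmetric bilinear form of signature `(2, n)` on `ℝ^(2+n)`:
`B x y = x₀y₀ + x₁y₁ - ∑ᵢ x_{i+2} y_{i+2}`. -/
def BR (n : ℕ) (x y : Fin (n + 2) → ℝ) : ℝ :=
  x 0 * y 0 + x 1 * y 1 - ∑ i : Fin n, x i.succ.succ * y i.succ.succ

/-- The ℂ-bilinear extension of `BR` to `ℂ^(2+n)`. -/
noncomputable def BC (n : ℕ) (x y : Fin (n + 2) → ℂ) : ℂ :=
  x 0 * y 0 + x 1 * y 1 - ∑ i : Fin n, x i.succ.succ * y i.succ.succ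

/-- Coordinatewise complex conjugation on `ℂ^(2+n)`. -/
noncomputable def conjVec {n : ℕ} (z : Fin (n + 2) → ℂ) : Fin (n + 2) → ℂ :=
  fun i => (starRingEnd ℂ) (z i)

/-- The period domain cone `Ω = {z : B_ℂ(z,z) = 0, B_ℂ(z,z̄) > 0}`; since
`B_ℂ(z, z̄)` is always real, the positivity is stated for its real part. -/
def Omega (n : ℕ) : Set (Fin (n + 2) → ℂ) :=
  {z | BC n z z = 0 ∧ 0 < (BC n z (conjVec z)).re}

open Topology

theorem BC_expand (m : ℕ) (x y : Fin (m + 1 + 2) → ℂ) :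
    BC (m + 1) x y = x 0 * y 0 + x 1 * y 1 -
      (x 2 * y 2 + ∑ j : Fin m, x j.succ.succ.succ * y j.succ.succ.succ) := by
  unfold BC
  rw [Fin.sum_univ_succ]
  rfl

theorem BC_smul (n : ℕ) (a b : ℂ) (x y : Fin (n + 2) → ℂ) :
    BC n (a • x) (b • y) = a * b * BC n x y := by
  unfold BC
  have h : ∑ i : Fin n, (a • x) i.succ.succ * (b • y) i.succ.succ
      = a * b * ∑ i : Fin n, x i.succ.succ * y i.succ.succ := by
    rw [Finset.mul_sum]
    exact Finset.sum_congr rfl fun i _ => by simp only [Pi.smul_apply, smul_eq_mul]; ring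
  rw [h]
  simp only [Pi.smul_apply, smul_eq_mul]
  ring

theorem Omega_smul (n : ℕ) {a : ℂ} (ha : a ≠ 0) {z : Fin (n + 2) → ℂ} (hz : z ∈ Omega n) :
    a • z ∈ Omega n := by
  obtain ⟨h1, h2⟩ := hz
  refine ⟨by rw [BC_smul, h1, mul_zero], ?_⟩
  have hc : conjVec (a • z) = (starRingEnd ℂ a) • conjVec z := by
    ext i; simp [conjVec]
  rw [hc, BC_smul, Complex.mul_conj, Complex.re_ofReal_mul]
  exact mul_pos (Complex.normSq_pos.2 ha) h2

/-- The hermitian norm, expanded. -/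
theorem norm_expand (m : ℕ) (z : Fin (m + 1 + 2) → ℂ) :
    (BC (m + 1) z (conjVec z)).re = Complex.normSq (z 0) + Complex.normSq (z 1)
      - (Complex.normSq (z 2) + ∑ j : Fin m, Complex.normSq (z j.succ.succ.succ)) := by
  rw [BC_expand]
  simp only [conjVec, Complex.mul_conj]
  norm_cast

theorem norm_normalized (m : ℕ) (z : Fin (m + 1 + 2) → ℂ) (h : BC (m + 1) z z = 0)
    (h1 : z 0 - z 2 = 1) :
    (BC (m + 1) z (conjVec z)).re
      = 2 * ((z 1).im ^ 2 - ∑ j : Fin m, (z j.succ.succ.succ).im ^ 2) := by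
  rw [norm_expand]
  rw [BC_expand] at h
  have hr := congrArg Complex.re h
  have e1 := congrArg Complex.re h1
  have e2 := congrArg Complex.im h1
  simp only [Complex.sub_re, Complex.add_re, Complex.re_sum, Complex.mul_re, Complex.sub_im,
    Complex.one_re, Complex.one_im, Complex.zero_re, Finset.sum_sub_distrib] at hr e1 e2
  have hs : ∑ j : Fin m, Complex.normSq (z j.succ.succ.succ)
      = ∑ j : Fin m, (z j.succ.succ.succ).re * (z j.succ.succ.succ).re
        + ∑ j : Fin m, (z j.succ.succ.succ).im * (z j.succ.succ.succ).im := by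
    rw [← Finset.sum_add_distrib]
    exact Finset.sum_congr rfl fun j _ => Complex.normSq_apply _
  rw [hs]
  simp only [Complex.normSq_apply, pow_two]
  linear_combination hr + 2 * ((z 0).im + (z 2).im) * e2

theorem Omega_ne (m : ℕ) {z : Fin (m + 1 + 2) → ℂ} (hz : z ∈ Omega (m + 1)) :
    z 0 - z 2 ≠ 0 := by
  intro h0
  obtain ⟨h, hp⟩ := hz
  rw [norm_expand] at hp
  rw [BC_expand] at h
  have h02 : z 0 = z 2 := sub_eq_zero.1 h0
  rw [h02] at h hp
  have h1 : z 1 * z 1 = ∑ j : Fin m, z j.succ.succ.succ * z j.succ.succ.succ := by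
    linear_combination h
  have h2 : Complex.normSq (z 1) ≤ ∑ j : Fin m, Complex.normSq (z j.succ.succ.succ) := by
    have := norm_sum_le Finset.univ (fun j : Fin m => z j.succ.succ.succ * z j.succ.succ.succ)
    rw [← h1] at this
    simpa [Complex.normSq_eq_norm_sq, pow_two] using this
  linarith

/-- The affine coordinate whose imaginary part distinguishes the components. -/
noncomputable def sg (m : ℕ) (z : Fin (m + 1 + 2) → ℂ) : ℝ := (z 1 / (z 0 - z 2)).im

theorem Omega_normalize (m : ℕ) {z : Fin (m + 1 + 2) → ℂ} (hz : z ∈ Omega (m + 1)) :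
    ∃ p : Fin (m + 1 + 2) → ℂ, p ∈ Omega (m + 1) ∧ p 0 - p 2 = 1 ∧ (p 1).im = sg m z ∧
      z = (z 0 - z 2) • p ∧
      ∑ j : Fin m, (p j.succ.succ.succ).im ^ 2 < (p 1).im ^ 2 := by
  have hne := Omega_ne m hz
  have hp := Omega_smul (m + 1) (inv_ne_zero hne) hz
  have h1 : ((z 0 - z 2)⁻¹ • z) 0 - ((z 0 - z 2)⁻¹ • z) 2 = 1 := by
    simp only [Pi.smul_apply, smul_eq_mul]
    field_simp
  refine ⟨(z 0 - z 2)⁻¹ • z, hp, h1, ?_, ?_, ?_⟩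
  · simp only [Pi.smul_apply, smul_eq_mul, sg]
    rw [div_eq_inv_mul]
  · rw [smul_smul, mul_inv_cancel₀ hne, one_smul]
  · have := hp.2
    rw [norm_normalized m _ hp.1 h1] at this
    linarith

theorem sg_ne (m : ℕ) {z : Fin (m + 1 + 2) → ℂ} (hz : z ∈ Omega (m + 1)) : sg m z ≠ 0 := by
  obtain ⟨p, _, _, h3, _, h5⟩ := Omega_normalize m hz
  rw [← h3]
  intro h
  rw [h] at h5
  have : 0 ≤ ∑ j : Fin m, (p j.succ.succ.succ).im ^ 2 := Finset.sum_nonneg fun j _ => sq_nonneg _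
  linarith

/-- The rational curve through two normalized points. -/
noncomputable def crv (m : ℕ) (p q : Fin (m + 1 + 2) → ℂ) (s : ℂ) : Fin (m + 1 + 2) → ℂ :=
  fun i => (1 - s) * p i + s * q i
    - s * (1 - s) * BC (m + 1) p q * (if i = 0 ∨ i = 2 then 1 else 0)

theorem crv_0 (m : ℕ) (p q : Fin (m + 1 + 2) → ℂ) (s : ℂ) :
    crv m p q s 0 = (1 - s) * p 0 + s * q 0 - s * (1 - s) * BC (m + 1) p q := by
  simp [crv]

theorem crv_2 (m : ℕ) (p q : Fin (m + 1 + 2) → ℂ) (s : ℂ) :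
    crv m p q s 2 = (1 - s) * p 2 + s * q 2 - s * (1 - s) * BC (m + 1) p q := by
  simp [crv]

theorem crv_1 (m : ℕ) (p q : Fin (m + 1 + 2) → ℂ) (s : ℂ) :
    crv m p q s 1 = (1 - s) * p 1 + s * q 1 := by
  have h : ¬ ((1 : Fin (m + 1 + 2)) = 0 ∨ (1 : Fin (m + 1 + 2)) = 2) := by
    simp [Fin.ext_iff]
    rw [Nat.mod_eq_of_lt (by omega)]
    omega
  simp only [crv, if_neg h]
  ring

theorem crv_j (m : ℕ) (p q : Fin (m + 1 + 2) → ℂ) (s : ℂ) (j : Fin m) :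
    crv m p q s j.succ.succ.succ = (1 - s) * p j.succ.succ.succ + s * q j.succ.succ.succ := by
  have h : ¬ ((j.succ.succ.succ : Fin (m + 1 + 2)) = 0 ∨
      (j.succ.succ.succ : Fin (m + 1 + 2)) = 2) := by
    simp [Fin.ext_iff]
    rw [Nat.mod_eq_of_lt (by omega)]
    omega
  simp only [crv, if_neg h]
  ring

theorem crv_norm (m : ℕ) (p q : Fin (m + 1 + 2) → ℂ) (s : ℂ)
    (hp : p 0 - p 2 = 1) (hq : q 0 - q 2 = 1) : crv m p q s 0 - crv m p q s 2 = 1 := by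
  rw [crv_0, crv_2]
  linear_combination (1 - s) * hp + s * hq

theorem crv_iso (m : ℕ) (p q : Fin (m + 1 + 2) → ℂ) (s : ℂ)
    (hp : p 0 - p 2 = 1) (hq : q 0 - q 2 = 1)
    (hpp : BC (m + 1) p p = 0) (hqq : BC (m + 1) q q = 0) :
    BC (m + 1) (crv m p q s) (crv m p q s) = 0 := by
  rw [BC_expand, crv_0, crv_1, crv_2]
  simp only [crv_j]
  have hs : ∑ j : Fin m, ((1 - s) * p j.succ.succ.succ + s * q j.succ.succ.succ)
        * ((1 - s) * p j.succ.succ.succ + s * q j.succ.succ.succ)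
      = (1 - s) ^ 2 * ∑ j : Fin m, p j.succ.succ.succ * p j.succ.succ.succ
        + 2 * s * (1 - s) * ∑ j : Fin m, p j.succ.succ.succ * q j.succ.succ.succ
        + s ^ 2 * ∑ j : Fin m, q j.succ.succ.succ * q j.succ.succ.succ := by
    simp only [Finset.mul_sum, ← Finset.sum_add_distrib]
    exact Finset.sum_congr rfl fun j _ => by ring
  rw [hs]
  have hpq := BC_expand m p q
  rw [BC_expand] at hpp hqq
  generalize BC (m + 1) p q = c at *
  generalize ∑ j : Fin m, p j.succ.succ.succ * p j.succ.succ.succ = A at *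
  generalize ∑ j : Fin m, p j.succ.succ.succ * q j.succ.succ.succ = B at *
  generalize ∑ j : Fin m, q j.succ.succ.succ * q j.succ.succ.succ = C at *
  linear_combination (1 - s) ^ 2 * hpp + s ^ 2 * hqq - 2 * s * (1 - s) * hpq
    - 2 * s * (1 - s) * c * ((1 - s) * hp + s * hq)

theorem crv_zero (m : ℕ) (p q : Fin (m + 1 + 2) → ℂ) : crv m p q 0 = p := by
  ext i; simp [crv]

theorem crv_one (m : ℕ) (p q : Fin (m + 1 + 2) → ℂ) : crv m p q 1 = q := by
  ext i; simp [crv]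

theorem crv_cont (m : ℕ) (p q : Fin (m + 1 + 2) → ℂ) : Continuous (crv m p q) := by
  unfold crv
  fun_prop

theorem crv_pair (m : ℕ) (p q d : Fin (m + 1 + 2) → ℂ) :
    ∃ γ : ℂ, ∀ s, BC (m + 1) (crv m p q s) d
      = (1 - s) * BC (m + 1) p d + s * BC (m + 1) q d + s * (1 - s) * γ := by
  refine ⟨- BC (m + 1) p q * (d 0 - d 2), fun s => ?_⟩
  rw [BC_expand m _ d, crv_0, crv_1, crv_2, BC_expand m p d, BC_expand m q d]
  simp only [crv_j]
  have hs : ∑ j : Fin m, ((1 - s) * p j.succ.succ.succ + s * q j.succ.succ.succ)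
        * d j.succ.succ.succ
      = (1 - s) * ∑ j : Fin m, p j.succ.succ.succ * d j.succ.succ.succ
        + s * ∑ j : Fin m, q j.succ.succ.succ * d j.succ.succ.succ := by
    simp only [Finset.mul_sum, ← Finset.sum_add_distrib]
    exact Finset.sum_congr rfl fun j _ => by ring
  rw [hs]
  ring

theorem quad_finite (α β γ : ℂ) (hα : α ≠ 0) :
    {s : ℂ | (1 - s) * α + s * β + s * (1 - s) * γ = 0}.Finite := by
  classical
  let P : Polynomial ℂ := (1 - Polynomial.X) * Polynomial.C α + Polynomial.X * Polynomial.C β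
    + Polynomial.X * (1 - Polynomial.X) * Polynomial.C γ
  have hP : P ≠ 0 := by
    intro h
    have := congrArg (Polynomial.eval 0) h
    simp [P] at this
    exact hα this
  refine (P.roots.toFinset.finite_toSet).subset fun s hs => ?_
  simp only [Finset.mem_coe, Multiset.mem_toFinset, Polynomial.mem_roots hP, Polynomial.IsRoot]
  simpa [P, mul_comm β s] using hs

/-- Planar curve avoiding a countable set. -/
theorem avoid (S C : Set ℂ) (hS : IsOpen S) (hseg : ∀ u ∈ Set.Icc (0 : ℝ) 1, (u : ℂ) ∈ S)
    (hC : C.Countable) (h0 : (0 : ℂ) ∉ C) (h1 : (1 : ℂ) ∉ C) :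
    ∃ t : ℝ, ∀ u ∈ Set.Icc (0 : ℝ) 1,
      (u : ℂ) + (t * u * (1 - u) : ℝ) * Complex.I ∈ S \ C := by
  have hcont : Continuous fun x : ℝ × ℝ => (x.2 : ℂ) + (x.1 * x.2 * (1 - x.2) : ℝ) * Complex.I := by
    fun_prop
  have hev : ∀ᶠ t : ℝ in 𝓝 0, ∀ u ∈ Set.Icc (0 : ℝ) 1,
      (u : ℂ) + (t * u * (1 - u) : ℝ) * Complex.I ∈ S := by
    refine isCompact_Icc.eventually_forall_of_forall_eventually fun u hu => ?_
    refine hcont.continuousAt.eventually (hS.mem_nhds ?_)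
    simpa using hseg u hu
  have hbad : ((fun c : ℂ => c.im / (c.re * (1 - c.re))) '' C).Countable := hC.image _
  obtain ⟨V, hVs, hVo, hV0⟩ := mem_nhds_iff.1 hev
  obtain ⟨t, htV, ht⟩ := (hbad.dense_compl ℝ).inter_open_nonempty V hVo ⟨0, hV0⟩
  refine ⟨t, fun u hu => ⟨hVs htV u hu, fun hc => ?_⟩⟩
  rcases eq_or_ne u 0 with rfl | hu0
  · simp at hc; exact h0 hc
  rcases eq_or_ne u 1 with rfl | hu1
  · simp at hc; exact h1 hc
  refine ht ⟨_, hc, ?_⟩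
  have : 1 - u ≠ 0 := sub_ne_zero.2 hu1.symm
  simp
  field_simp

theorem cone_convex (m : ℕ) (a b : ℝ) (x y : Fin m → ℝ) (ha : 0 < a) (hb : 0 < b)
    (hx : ∑ j, x j ^ 2 < a ^ 2) (hy : ∑ j, y j ^ 2 < b ^ 2) (u : ℝ) (hu : u ∈ Set.Icc (0 : ℝ) 1) :
    0 < (1 - u) * a + u * b ∧
      ∑ j, ((1 - u) * x j + u * y j) ^ 2 < ((1 - u) * a + u * b) ^ 2 := by
  obtain ⟨h0, h1⟩ := hu
  have hcs := Finset.sum_mul_sq_le_sq_mul_sq Finset.univ x y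
  have hxy : ∑ j, x j * y j < a * b := by
    refine lt_of_pow_lt_pow_left₀ 2 (by positivity) (hcs.trans_lt ?_)
    rw [mul_pow]
    exact mul_lt_mul'' hx hy (Finset.sum_nonneg fun j _ => sq_nonneg _)
      (Finset.sum_nonneg fun j _ => sq_nonneg _)
  have hs : ∑ j, ((1 - u) * x j + u * y j) ^ 2
      = (1 - u) ^ 2 * ∑ j, x j ^ 2 + 2 * u * (1 - u) * ∑ j, x j * y j + u ^ 2 * ∑ j, y j ^ 2 := by
    simp only [Finset.mul_sum, ← Finset.sum_add_distrib]
    exact Finset.sum_congr rfl fun j _ => by ring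
  rw [hs]
  rcases eq_or_lt_of_le h0 with rfl | h0
  · simpa using ⟨ha, hx⟩
  have h1' : 0 ≤ 1 - u := by linarith
  refine ⟨by positivity, ?_⟩
  have i1 := mul_le_mul_of_nonneg_left hx.le (sq_nonneg (1 - u))
  have i2 := mul_le_mul_of_nonneg_left hxy.le (by positivity : 0 ≤ 2 * u * (1 - u))
  have i3 := mul_lt_mul_of_pos_left hy (by positivity : 0 < u ^ 2)
  nlinarith

/-- The complement of the hyperplanes. -/
def XX (m : ℕ) (Δ : Set (Fin (m + 1 + 2) → ℝ)) : Set (Fin (m + 1 + 2) → ℂ) :=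
  Omega (m + 1) \ ⋃ δ ∈ Δ, {z | BC (m + 1) z (fun i => (δ i : ℂ)) = 0}

theorem mem_XX (m : ℕ) (Δ : Set (Fin (m + 1 + 2) → ℝ)) (z : Fin (m + 1 + 2) → ℂ) :
    z ∈ XX m Δ ↔ z ∈ Omega (m + 1) ∧ ∀ δ ∈ Δ, BC (m + 1) z (fun i => (δ i : ℂ)) ≠ 0 := by
  simp [XX]

theorem XX_smul (m : ℕ) (Δ : Set (Fin (m + 1 + 2) → ℝ)) {a : ℂ} (ha : a ≠ 0)
    {z : Fin (m + 1 + 2) → ℂ} (hz : z ∈ XX m Δ) : a • z ∈ XX m Δ := by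
  rw [mem_XX] at hz ⊢
  refine ⟨Omega_smul _ ha hz.1, fun δ hδ h => ?_⟩
  have := BC_smul (m + 1) a 1 z (fun i => (δ i : ℂ))
  rw [one_smul, h, mul_one] at this
  exact hz.2 δ hδ ((mul_eq_zero.1 this.symm).resolve_left ha)

theorem sg_smul (m : ℕ) {a : ℂ} (ha : a ≠ 0) (z : Fin (m + 1 + 2) → ℂ) :
    sg m (a • z) = sg m z := by
  unfold sg
  simp only [Pi.smul_apply, smul_eq_mul, ← mul_sub]
  rw [mul_div_mul_left _ _ ha]

theorem half_preconnected (m : ℕ) (Δ : Set (Fin (m + 1 + 2) → ℝ)) (hcount : Δ.Countable)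
    (ε : ℝ) (hε : ε ^ 2 = 1) : IsPreconnected {z | z ∈ XX m Δ ∧ 0 < ε * sg m z} := by
  have hε0 : ε ≠ 0 := by rintro rfl; norm_num at hε
  refine isPreconnected_of_forall_pair fun x hx y hy => ?_
  obtain ⟨hxX, hxs⟩ := hx
  obtain ⟨hyX, hys⟩ := hy
  have hxO := ((mem_XX ..).1 hxX).1
  have hyO := ((mem_XX ..).1 hyX).1
  have hxne := Omega_ne m hxO
  have hyne := Omega_ne m hyO
  obtain ⟨p, hpO, hp1, hpim, hpx, hpc⟩ := Omega_normalize m hxO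
  obtain ⟨q, hqO, hq1, hqim, hqy, hqc⟩ := Omega_normalize m hyO
  rw [← hpim] at hxs
  rw [← hqim] at hys
  have hpX : ∀ δ ∈ Δ, BC (m + 1) p (fun i => (δ i : ℂ)) ≠ 0 := by
    intro δ hδ h
    refine ((mem_XX ..).1 hxX).2 δ hδ ?_
    have := BC_smul (m + 1) (x 0 - x 2) 1 p (fun i => (δ i : ℂ))
    rwa [h, mul_zero, one_smul, ← hpx] at this
  have hqX : ∀ δ ∈ Δ, BC (m + 1) q (fun i => (δ i : ℂ)) ≠ 0 := by
    intro δ hδ h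
    refine ((mem_XX ..).1 hyX).2 δ hδ ?_
    have := BC_smul (m + 1) (y 0 - y 2) 1 q (fun i => (δ i : ℂ))
    rwa [h, mul_zero, one_smul, ← hqy] at this
  let S : Set ℂ := {s | 0 < ε * (crv m p q s 1).im ∧
    ∑ j : Fin m, (crv m p q s j.succ.succ.succ).im ^ 2 < (crv m p q s 1).im ^ 2}
  let C : Set ℂ := ⋃ δ ∈ Δ, {s | BC (m + 1) (crv m p q s) (fun i => (δ i : ℂ)) = 0}
  have hci : ∀ i, Continuous fun s => (crv m p q s i).im := fun i =>
    Complex.continuous_im.comp ((continuous_apply i).comp (crv_cont m p q))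
  have hS : IsOpen S := by
    refine (isOpen_lt continuous_const (continuous_const.mul (hci 1))).inter
      (isOpen_lt ?_ ((hci 1).pow 2))
    exact continuous_finsetSum _ fun j _ => (hci _).pow 2
  have hC : C.Countable := by
    refine hcount.biUnion fun δ hδ => Set.Finite.countable ?_
    obtain ⟨γ, hγ⟩ := crv_pair m p q (fun i => (δ i : ℂ))
    simp only [hγ]
    exact quad_finite _ _ _ (hpX δ hδ)
  have hsq : ∀ r : ℝ, (ε * r) ^ 2 = r ^ 2 := fun r => by rw [mul_pow, hε, one_mul]
  have hseg : ∀ u ∈ Set.Icc (0 : ℝ) 1, (u : ℂ) ∈ S := by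
    intro u hu
    have hcx := cone_convex m (ε * (p 1).im) (ε * (q 1).im)
      (fun j => (p j.succ.succ.succ).im) (fun j => (q j.succ.succ.succ).im) hxs hys
      (by rw [hsq]; exact hpc) (by rw [hsq]; exact hqc) u hu
    have him : ∀ a b : ℂ, ((1 - (u : ℂ)) * a + u * b).im = (1 - u) * a.im + u * b.im := by
      intro a b; simp
    have he : (1 - u) * (ε * (p 1).im) + u * (ε * (q 1).im)
      = ε * ((1 - u) * (p 1).im + u * (q 1).im) := by ring
    rw [he, hsq] at hcx
    simp only [S, Set.mem_ofPred_eq, crv_1, crv_j, him]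
    exact hcx
  have h0 : (0 : ℂ) ∉ C := by
    simp only [C, Set.mem_iUnion, Set.mem_ofPred_eq, crv_zero, not_exists]
    exact fun δ hδ => hpX δ hδ
  have h1 : (1 : ℂ) ∉ C := by
    simp only [C, Set.mem_iUnion, Set.mem_ofPred_eq, crv_one, not_exists]
    exact fun δ hδ => hqX δ hδ
  obtain ⟨t, ht⟩ := avoid S C hS hseg hC h0 h1
  let g : ℂ × ℝ → (Fin (m + 1 + 2) → ℂ) := fun w =>
    w.1 • crv m p q ((w.2 : ℂ) + (t * w.2 * (1 - w.2) : ℝ) * Complex.I)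
  have hg : Continuous g := by
    refine continuous_fst.smul ((crv_cont m p q).comp ?_)
    fun_prop
  refine ⟨g '' (({0}ᶜ : Set ℂ) ×ˢ Set.Icc (0 : ℝ) 1), ?_, ?_, ?_, ?_⟩
  · rintro _ ⟨⟨a, u⟩, ⟨ha, hu⟩, rfl⟩
    have ha : a ≠ 0 := ha
    obtain ⟨⟨hs1, hs2⟩, hs3⟩ := ht u hu
    simp only [g]
    generalize (u : ℂ) + (t * u * (1 - u) : ℝ) * Complex.I = s at *
    have hn := crv_norm m p q s hp1 hq1
    have hi := crv_iso m p q s hp1 hq1 hpO.1 hqO.1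
    refine ⟨XX_smul m Δ ha ?_, ?_⟩
    · rw [mem_XX]
      refine ⟨⟨hi, ?_⟩, fun δ hδ h => hs3 ?_⟩
      · rw [norm_normalized m _ hi hn]; linarith
      · exact Set.mem_biUnion hδ h
    · rw [sg_smul m ha, sg, hn, div_one]
      exact hs1
  · exact ⟨(x 0 - x 2, 0), ⟨hxne, by simp⟩, by simp [g, crv_zero, ← hpx]⟩
  · exact ⟨(y 0 - y 2, 1), ⟨hyne, by simp⟩, by simp [g, crv_one, ← hqy]⟩
  · refine IsPreconnected.image ?_ _ hg.continuousOn
    exact (isConnected_compl_singleton_of_one_lt_rank (by simp) (0 : ℂ)).isPreconnected.prod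
      isPreconnected_Icc

theorem exists_generic (n : ℕ) (Δ : Set (Fin (n + 2) → ℝ)) (hcount : Δ.Countable)
    (hneg : ∀ δ ∈ Δ, BR n δ δ < 0) :
    ∃ x : Fin (n + 2) → ℝ, 0 < BR n x x ∧ ∀ δ ∈ Δ, BR n x δ ≠ 0 := by
  have hc : ∀ δ : Fin (n + 2) → ℝ, Continuous fun x => BR n x δ := by
    intro δ; unfold BR; fun_prop
  have hd : Dense (⋂ δ ∈ Δ, {x | BR n x δ ≠ 0}) := by
    refine dense_biInter_of_isOpen (fun δ _ => isOpen_ne_fun (hc δ) continuous_const) hcount ?_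
    intro δ hδ
    let L : Submodule ℝ (Fin (n + 2) → ℝ) :=
      { carrier := {x | BR n x δ = 0}
        add_mem' := by
          intro a b ha hb
          have : BR n (a + b) δ = BR n a δ + BR n b δ := by
            simp only [BR, Pi.add_apply, add_mul, Finset.sum_add_distrib]; ring
          simp only [Set.mem_ofPred_eq] at *
          rw [this, ha, hb, add_zero]
        zero_mem' := by simp [BR]
        smul_mem' := by
          intro c a ha
          have : BR n (c • a) δ = c * BR n a δ := by
            simp only [BR, Pi.smul_apply, smul_eq_mul, mul_assoc, ← Finset.mul_sum]; ring
          simp only [Set.mem_ofPred_eq] at *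
          rw [this, ha, mul_zero] }
    have : interior (L : Set (Fin (n + 2) → ℝ)) = ∅ := by
      by_contra hne
      have := Submodule.eq_top_of_nonempty_interior' L (Set.nonempty_iff_ne_empty.2 hne)
      have hm : δ ∈ L := by rw [this]; trivial
      exact (hneg δ hδ).ne hm
    exact interior_eq_empty_iff_dense_compl.1 this
  have ho : IsOpen {x : Fin (n + 2) → ℝ | 0 < BR n x x} := by
    refine isOpen_lt continuous_const ?_
    unfold BR; fun_prop
  obtain ⟨x, hx, hxd⟩ := hd.inter_open_nonempty _ ho
    ⟨fun i => if i = 0 then 1 else 0, by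
      simp [BR, Fin.succ_ne_zero]⟩
  exact ⟨x, hx, by simpa using hxd⟩

theorem XX_nonempty (m : ℕ) (Δ : Set (Fin (m + 1 + 2) → ℝ)) (hcount : Δ.Countable)
    (hneg : ∀ δ ∈ Δ, BR (m + 1) δ δ < 0) : (XX m Δ).Nonempty := by
  obtain ⟨x, hx, hxd⟩ := exists_generic (m + 1) Δ hcount hneg
  have hS : 0 ≤ ∑ i : Fin (m + 1), x i.succ.succ * x i.succ.succ :=
    Finset.sum_nonneg fun i _ => mul_self_nonneg _
  have hr : 0 < x 0 * x 0 + x 1 * x 1 := by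
    unfold BR at hx; linarith
  obtain ⟨c, hc⟩ : ∃ c : ℝ, c ^ 2 * (x 0 * x 0 + x 1 * x 1) = BR (m + 1) x x := by
    refine ⟨√(BR (m + 1) x x / (x 0 * x 0 + x 1 * x 1)), ?_⟩
    rw [Real.sq_sqrt (by positivity)]
    exact div_mul_cancel₀ _ hr.ne'
  let y : Fin (m + 1 + 2) → ℝ := Fin.cons (-(c * x 1)) (Fin.cons (c * x 0) 0)
  have y0 : y 0 = -(c * x 1) := rfl
  have y1 : y 1 = c * x 0 := rfl
  have yj : ∀ i : Fin (m + 1), y i.succ.succ = 0 := fun i => rfl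
  have key : ∀ d : Fin (m + 1 + 2) → ℂ, BC (m + 1) (fun i => (x i : ℂ) + y i * Complex.I) d
      = (x 0 + y 0 * Complex.I) * d 0 + (x 1 + y 1 * Complex.I) * d 1
        - ∑ i : Fin (m + 1), x i.succ.succ * d i.succ.succ := by
    intro d; simp [BC, yj]
  refine ⟨fun i => (x i : ℂ) + y i * Complex.I, ?_⟩
  rw [mem_XX]
  refine ⟨⟨?_, ?_⟩, ?_⟩
  · rw [key]
    simp only [yj, y0, y1, BR] at hc ⊢
    have hc' := congrArg (fun r : ℝ => (r : ℂ)) hc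
    push_cast at hc' ⊢
    simp only [zero_mul, add_zero]
    linear_combination (c ^ 2 * (x 0 * x 0 + x 1 * x 1) : ℂ) * Complex.I_sq - hc'
  · rw [key]
    simp only [yj, y0, y1, BR, conjVec] at hx ⊢
    simp [-Fin.succ_zero_eq_one]
    nlinarith [sq_nonneg (c * x 1), sq_nonneg (c * x 0)]
  · intro δ hδ h
    rw [key] at h
    apply hxd δ hδ
    have := congrArg Complex.re h
    simp at this
    simpa [BR] using this

theorem XX_conj (m : ℕ) (Δ : Set (Fin (m + 1 + 2) → ℝ)) {z : Fin (m + 1 + 2) → ℂ}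
    (hz : z ∈ XX m Δ) : conjVec z ∈ XX m Δ ∧ sg m (conjVec z) = - sg m z := by
  have hcc : ∀ x y : Fin (m + 1 + 2) → ℂ,
      BC (m + 1) (conjVec x) (conjVec y) = (starRingEnd ℂ) (BC (m + 1) x y) := by
    intro x y; simp [BC, conjVec]
  rw [mem_XX] at hz
  obtain ⟨⟨h1, h2⟩, h3⟩ := hz
  refine ⟨(mem_XX ..).2 ⟨⟨?_, ?_⟩, ?_⟩, ?_⟩
  · rw [hcc, h1, map_zero]
  · rw [hcc, Complex.conj_re]; exact h2
  · intro δ hδ h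
    have hd : conjVec (fun i => (δ i : ℂ)) = fun i => (δ i : ℂ) := by ext i; simp [conjVec]
    rw [← hd, hcc] at h
    exact h3 δ hδ ((map_eq_zero _).1 h)
  · simp only [sg, conjVec, ← map_sub, ← map_div₀, Complex.conj_im]

theorem XX_card (m : ℕ) (Δ : Set (Fin (m + 1 + 2) → ℝ)) (hcount : Δ.Countable)
    (hneg : ∀ δ ∈ Δ, BR (m + 1) δ δ < 0) : Nat.card (ConnectedComponents (XX m Δ)) = 2 := by
  obtain ⟨a, ha, b, hb, hsa, hsb⟩ : ∃ a ∈ XX m Δ, ∃ b ∈ XX m Δ, 0 < sg m a ∧ sg m b < 0 := by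
    obtain ⟨z, hz⟩ := XX_nonempty m Δ hcount hneg
    obtain ⟨hz', hs⟩ := XX_conj m Δ hz
    rcases lt_or_gt_of_ne (sg_ne m ((mem_XX ..).1 hz).1) with h | h
    · exact ⟨_, hz', z, hz, by linarith, h⟩
    · exact ⟨z, hz, _, hz', h, by linarith⟩
  have hcont : Continuous fun z : XX m Δ => sg m z := by
    unfold sg
    refine Complex.continuous_im.comp (Continuous.div ?_ ?_ ?_)
    · exact (continuous_apply 1).comp continuous_subtype_val
    · exact ((continuous_apply 0).comp continuous_subtype_val).sub
        ((continuous_apply 2).comp continuous_subtype_val)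
    · intro z; exact Omega_ne m ((mem_XX ..).1 z.2).1
  have hcl : IsClopen {z : XX m Δ | 0 < sg m z} := by
    refine ⟨?_, isOpen_lt continuous_const hcont⟩
    have : {z : XX m Δ | 0 < sg m z} = {z : XX m Δ | 0 ≤ sg m z} := by
      ext z
      change 0 < sg m z ↔ 0 ≤ sg m z
      exact ⟨fun h => le_of_lt h,
        fun h => lt_of_le_of_ne h (sg_ne m ((mem_XX ..).1 z.2).1).symm⟩
    rw [this]
    exact isClosed_le continuous_const hcont
  have hpre : ∀ ε : ℝ, ε ^ 2 = 1 → IsPreconnected {z : XX m Δ | 0 < ε * sg m z} := by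
    intro ε hε
    rw [← Topology.IsInducing.subtypeVal.isPreconnected_image]
    convert half_preconnected m Δ hcount ε hε using 1
    ext z
    simp [and_comm]
  rw [Nat.card_eq_two_iff]
  refine ⟨ConnectedComponents.mk ⟨a, ha⟩, ConnectedComponents.mk ⟨b, hb⟩, ?_, ?_⟩
  · intro h
    have h' := ConnectedComponents.coe_eq_coe'.1 h.symm
    have := hcl.connectedComponent_subset (x := ⟨a, ha⟩) hsa h'
    exact absurd this (not_lt.2 hsb.le)
  · rw [Set.eq_univ_iff_forall]
    intro c
    obtain ⟨z, rfl⟩ := ConnectedComponents.surjective_coe c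
    rcases lt_or_gt_of_ne (sg_ne m ((mem_XX ..).1 z.2).1) with h | h
    · right
      refine ConnectedComponents.coe_eq_coe'.2 ?_
      refine (hpre (-1) (by norm_num)).subset_connectedComponent (x := ⟨b, hb⟩) ?_ ?_
      · simpa using hsb
      · simpa using h
    · left
      refine ConnectedComponents.coe_eq_coe'.2 ?_
      refine (hpre 1 (by norm_num)).subset_connectedComponent (x := ⟨a, ha⟩) ?_ ?_
      · simpa using hsa
      · simpa using h

/-!
STATEMENT 10: If `Δ` is a countable set of real vectors with `B δ δ < 0` for all
`δ ∈ Δ`, then the complement in `Ω` of the complex hyperplanes orthogonal to the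
vectors of `Δ` has exactly two connected components.
-/
theorem period_domain_two_components (n : ℕ) (hn : 1 ≤ n)
    (Δ : Set (Fin (n + 2) → ℝ)) (hcount : Δ.Countable)
    (hneg : ∀ δ ∈ Δ, BR n δ δ < 0) :
    Nat.card (ConnectedComponents
      ↥(Omega n \ ⋃ δ ∈ Δ, {z | BC n z (fun i => (δ i : ℂ)) = 0})) = 2 := by
  obtain ⟨m, rfl⟩ : ∃ m, n = m + 1 := ⟨n - 1, by omega⟩
  exact XX_card m Δ hcount hneg
end
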